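/- arXiv:1608.06847 — 3 statements merged into one kernel-verified Lean document; each statement's English description precedes it below -/
import Mathlib

section
/- Let (a_n)_{n≥1} be the sequence of Rudin–Shapiro integers. Then for Lebesgue-almost all real α, for every ε > 0 there are infinitely many N with N·D_N*({a_1 α}, …, {a_N α}) ≥ N^{1/2 − ε}. -/
open Filter MeasureTheory

/-- Number of occurrences of the block `11` in a list of binary digits. -/
def pairs11 : List ℕ → ℕ
  | a :: b :: rest => (if a = 1 ∧ b = 1 then 1 else 0) + pairs11 (b :: rest)
  | _ => 0

/-- The Rudin–Shapiro sequence: `rs k = 1` if the number of `11`-blocks in the binary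
representation of `k` is even, and `rs k = -1` otherwise. -/
def rs (k : ℕ) : ℤ := if pairs11 (Nat.digits 2 k) % 2 = 0 then 1 else -1

/-- The `n`-th Rudin–Shapiro integer (indexed from `n = 1`): the increasing enumeration
of `{k : rs k = 1}`, so `rsInt 1 = 0`, `rsInt 2 = 1`, `rsInt 3 = 2`, `rsInt 4 = 4`, ... -/
noncomputable def rsInt (n : ℕ) : ℕ := Nat.nth (fun k => rs k = 1) (n - 1)

/-- Star-discrepancy of the first `N` points `x 1, ..., x N` of a sequence in `[0,1)`. -/
noncomputable def starDisc (N : ℕ) (x : ℕ → ℝ) : ℝ :=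
  ⨆ β : Set.Ioc (0:ℝ) 1,
    |(((Finset.Icc 1 N).filter fun n => 0 ≤ x n ∧ x n < (β : ℝ)).card : ℝ) / N - (β : ℝ)|

/-!
Only the exponential sum at frequency `1` is needed. The Shapiro polynomials
`P m z = ∑_{k < 2 ^ m} r_k z ^ k` and `Q m = P (m + 1) - P m` satisfy `P (m + 1) = P m + Q m` and
`Q (m + 1) = z ^ 2 ^ (m + 1) (P m - Q m)`, so on the unit circle the parallelogram law doubles
`|P m|² + |Q m|²` at each step. As `Q m` is a difference of consecutive `P`'s, at every `z` on the
circle one of `P m`, `P (m + 1)` has modulus of the order of `√(2 ^ m)`. Since `1 + r_k` is twice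
the indicator of the Rudin–Shapiro integers, the sum of `exp (2πi a_n α)` inherits this lower bound
up to a geometric sum, bounded for `α ∉ ℤ`; for `α ∈ ℤ` the sum of the first `N` terms is `N`.
Koksma's inequality turns lower bounds for exponential sums into lower bounds for the discrepancy.
-/

open Finset
open scoped FourierTransform

section RudinShapiro

lemma rs_eq_neg_one_pow (k : ℕ) : rs k = (-1) ^ pairs11 (Nat.digits 2 k) := by
  simp only [rs, neg_one_pow_eq_ite, Nat.even_iff]

lemma rs_zero : rs 0 = 1 := by simp [rs, pairs11]

lemma rs_two_mul (k : ℕ) : rs (2 * k) = rs k := by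
  have pairs11_zero_cons (l : List ℕ) : pairs11 (0 :: l) = pairs11 l := by
    cases l <;> simp [pairs11]
  rcases k.eq_zero_or_pos with rfl | hk
  · simp
  · rw [rs, Nat.digits_base_mul one_lt_two hk, pairs11_zero_cons, ← rs]

lemma rs_two_mul_add_one (k : ℕ) : rs (2 * k + 1) = (-1) ^ k * rs k := by
  have pairs11_one_cons : pairs11 (1 :: Nat.digits 2 k) = k % 2 + pairs11 (Nat.digits 2 k) := by
    rcases k.eq_zero_or_pos with rfl | hk
    · simp [pairs11]
    · rw [Nat.digits_def' one_lt_two hk, pairs11]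
      rcases Nat.mod_two_eq_zero_or_one k with h | h <;> simp [h]
  rw [rs_eq_neg_one_pow, rs_eq_neg_one_pow, add_comm, Nat.digits_add 2 one_lt_two 1 k one_lt_two
    (.inl one_ne_zero), pairs11_one_cons, pow_add, ← neg_one_pow_eq_pow_mod_two]

lemma rs_one : rs 1 = 1 := by simpa [rs_zero] using rs_two_mul_add_one 0

lemma rs_two_pow (m : ℕ) : rs (2 ^ m) = 1 := by
  induction m with
  | zero => exact rs_one
  | succ m ih => rw [pow_succ', rs_two_mul, ih]

lemma infinite_setOf_rs_eq_one : {k | rs k = 1}.Infinite :=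
  Set.infinite_of_injective_forall_mem (Nat.pow_right_injective le_rfl) rs_two_pow

lemma rs_eq_one_or_eq_neg_one (k : ℕ) : rs k = 1 ∨ rs k = -1 :=
  rs_eq_neg_one_pow k ▸ neg_one_pow_eq_or ℤ _

end RudinShapiro

section ShapiroPolynomials

variable {R : Type*} [CommRing R]

/-- The value at `z` of the Rudin–Shapiro polynomial `∑_{k < n} r_k z ^ k`; for `n = 2 ^ m` it is
the `m`-th Shapiro polynomial. -/
def rsPoly (n : ℕ) (z : R) : R := ∑ k ∈ range n, (rs k : R) * z ^ k

lemma rsPoly_succ (n : ℕ) (z : R) : rsPoly (n + 1) z = rsPoly n z + rs n * z ^ n :=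
  sum_range_succ _ _

lemma rsPoly_two_mul (n : ℕ) (z : R) :
    rsPoly (2 * n) z = rsPoly n (z ^ 2) + z * rsPoly n (-z ^ 2) := by
  induction n with
  | zero => simp [rsPoly]
  | succ n ih =>
    rw [show 2 * (n + 1) = 2 * n + 1 + 1 by ring, rsPoly_succ, rsPoly_succ, ih, rsPoly_succ,
      rsPoly_succ, rs_two_mul, rs_two_mul_add_one, neg_pow (z ^ 2) n]
    push_cast
    ring

lemma rsPoly_two_pow_succ_sub (m : ℕ) (z : R) :
    rsPoly (2 ^ (m + 2)) z - rsPoly (2 ^ (m + 1)) z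
      = z ^ 2 ^ (m + 1) *
        (rsPoly (2 ^ m) z - (rsPoly (2 ^ (m + 1)) z - rsPoly (2 ^ m) z)) := by
  induction m generalizing z with
  | zero =>
    have rs_two : rs 2 = 1 := rs_two_pow 1
    have rs_three : rs 3 = -1 := by simpa [rs_one] using rs_two_mul_add_one 1
    simp only [rsPoly, zero_add, pow_zero, pow_one, sum_range_succ, range_one,
      sum_singleton, Nat.reducePow, rs_zero, rs_one, rs_two, rs_three]
    push_cast
    ring
  | succ m ih =>
    have rsPoly_split (j : ℕ) : rsPoly (2 ^ (j + 1)) z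
        = rsPoly (2 ^ j) (z ^ 2) + z * rsPoly (2 ^ j) (-z ^ 2) := by
      rw [pow_succ', rsPoly_two_mul]
    have h_pow : z ^ 2 ^ (m + 1 + 1) = (z ^ 2) ^ 2 ^ (m + 1) := by rw [← pow_mul, ← pow_succ']
    have h_neg : (-z ^ 2) ^ 2 ^ (m + 1) = (z ^ 2) ^ 2 ^ (m + 1) :=
      (even_two.pow_of_ne_zero m.succ_ne_zero).neg_pow _
    have ih_neg := ih (-z ^ 2)
    rw [h_neg] at ih_neg
    rw [rsPoly_split (m + 2), rsPoly_split (m + 1), rsPoly_split m, h_pow]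
    linear_combination ih (z ^ 2) + z * ih_neg

lemma norm_sq_rsPoly_add_norm_sq_sub (m : ℕ) {z : ℂ} (hz : ‖z‖ = 1) :
    ‖rsPoly (2 ^ m) z‖ ^ 2 + ‖rsPoly (2 ^ (m + 1)) z - rsPoly (2 ^ m) z‖ ^ 2 = 2 ^ (m + 1) := by
  induction m with
  | zero => norm_num [rsPoly, sum_range_succ, rs_zero, rs_one, hz]
  | succ m ih =>
    have h := parallelogram_law_with_norm ℝ (rsPoly (2 ^ m) z)
      (rsPoly (2 ^ (m + 1)) z - rsPoly (2 ^ m) z)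
    rw [add_sub_cancel, ih] at h
    rw [rsPoly_two_pow_succ_sub, norm_mul, norm_pow, hz, one_pow, one_mul, h, ← pow_succ']

lemma frequently_sqrt_two_pow_le_norm_rsPoly {z : ℂ} (hz : ‖z‖ = 1) :
    ∃ᶠ m : ℕ in atTop, √(2 ^ m) ≤ 2 * ‖rsPoly (2 ^ m) z‖ := by
  refine frequently_atTop.mpr fun m => ?_
  by_contra! h_small
  have norm_sq_lt (j : ℕ) (hj : m ≤ j) : 4 * ‖rsPoly (2 ^ j) z‖ ^ 2 < 2 ^ j := by
    have h := (Real.lt_sqrt (by positivity)).mp (h_small j hj)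
    linarith
  have h_sub : ‖rsPoly (2 ^ (m + 1)) z - rsPoly (2 ^ m) z‖ ^ 2
      ≤ 2 * (‖rsPoly (2 ^ (m + 1)) z‖ ^ 2 + ‖rsPoly (2 ^ m) z‖ ^ 2) := by
    rw [← parallelogram_law_with_norm ℝ]
    exact le_add_of_nonneg_left (sq_nonneg _)
  have h_sum := norm_sq_rsPoly_add_norm_sq_sub m hz
  have h₀ := norm_sq_lt m le_rfl
  have h₁ := norm_sq_lt (m + 1) m.le_succ
  have h_pow : (2 : ℝ) ^ (m + 1) = 2 * 2 ^ m := pow_succ' 2 m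
  have h_pos : (0 : ℝ) < 2 ^ m := by positivity
  linarith

end ShapiroPolynomials

section Enumeration

lemma sum_range_count_nth {M : Type*} [AddCommMonoid M] (p : ℕ → Prop) [DecidablePred p]
    (f : ℕ → M) (n : ℕ) :
    ∑ i ∈ range (Nat.count p n), f (Nat.nth p i) = ∑ k ∈ range n with p k, f k := by
  induction n with
  | zero => simp
  | succ n ih =>
    rw [Nat.count_succ, range_add_one, filter_insert]
    by_cases hn : p n
    · rw [if_pos hn, if_pos hn, sum_range_succ, sum_insert (by simp), Nat.nth_count hn, ih,
        add_comm]
    · rw [if_neg hn, if_neg hn, add_zero, ih]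

lemma tendsto_count_atTop {p : ℕ → Prop} [DecidablePred p] (hp : {k | p k}.Infinite) :
    Tendsto (Nat.count p) atTop atTop :=
  tendsto_atTop_atTop_of_monotone (Nat.count_monotone p) fun n =>
    ⟨Nat.nth p n, (Nat.count_nth_of_infinite hp n).ge⟩

lemma two_mul_sum_pow_rsInt {R : Type*} [CommRing R] (z : R) (M : ℕ) :
    2 * ∑ n ∈ Icc 1 (Nat.count (rs · = 1) M), z ^ rsInt n
      = rsPoly M z + ∑ k ∈ range M, z ^ k := by
  have h_index (N : ℕ) : ∑ n ∈ Icc 1 N, z ^ rsInt n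
      = ∑ i ∈ range N, z ^ Nat.nth (rs · = 1) i := by
    simp only [← Ico_add_one_right_eq_Icc, sum_Ico_eq_sum_range, rsInt, add_tsub_cancel_left,
      add_tsub_cancel_right]
  rw [h_index, sum_range_count_nth _ (z ^ ·), sum_filter, mul_sum, rsPoly, ← sum_add_distrib]
  refine sum_congr rfl fun k _ => ?_
  rcases rs_eq_one_or_eq_neg_one k with h | h
  · simp [h, two_mul]
  · simp [h]

end Enumeration

section ExponentialSum

lemma norm_geom_sum_le {z : ℂ} (hz : ‖z‖ = 1) (hz1 : z ≠ 1) (M : ℕ) :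
    ‖∑ k ∈ range M, z ^ k‖ ≤ 2 / ‖z - 1‖ := by
  have h_num : ‖z ^ M - 1‖ ≤ 2 := by
    calc ‖z ^ M - 1‖ ≤ ‖z ^ M‖ + ‖(1 : ℂ)‖ := norm_sub_le _ _
      _ = 2 := by rw [norm_pow, hz, one_pow, norm_one]; norm_num
  rw [geom_sum_eq hz1, norm_div]
  gcongr

lemma norm_rsPoly_le {z : ℂ} (hz : ‖z‖ = 1) (hz1 : z ≠ 1) (M : ℕ) :
    ‖rsPoly M z‖ ≤ 2 * ‖∑ n ∈ Icc 1 (Nat.count (rs · = 1) M), z ^ rsInt n‖ + 2 / ‖z - 1‖ := by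
  rw [← add_sub_cancel_right (rsPoly M z) (∑ k ∈ range M, z ^ k), ← two_mul_sum_pow_rsInt]
  refine (norm_sub_le _ _).trans (add_le_add ?_ (norm_geom_sum_le hz hz1 M))
  rw [norm_mul, Complex.norm_ofNat]

lemma frequently_sqrt_le_norm_sum_pow_rsInt {z : ℂ} (hz : ‖z‖ = 1) :
    ∃ᶠ N : ℕ in atTop, √N ≤ 8 * ‖∑ n ∈ Icc 1 N, z ^ rsInt n‖ := by
  rcases eq_or_ne z 1 with rfl | hz1
  · refine (Eventually.of_forall fun N : ℕ => ?_).frequently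
    have h_sqrt : √(N : ℝ) ≤ N :=
      Real.sqrt_le_iff.mpr ⟨N.cast_nonneg, by exact_mod_cast Nat.le_self_pow two_ne_zero N⟩
    simp only [one_pow, sum_const, Nat.card_Icc, add_tsub_cancel_right, nsmul_one,
      Complex.norm_natCast]
    linarith [N.cast_nonneg (α := ℝ)]
  have h_large : ∀ᶠ m : ℕ in atTop, 8 / ‖z - 1‖ ≤ √(2 ^ m) :=
    (Real.tendsto_sqrt_atTop.comp
      (tendsto_pow_atTop_atTop_of_one_lt one_lt_two)).eventually_ge_atTop _
  refine ((tendsto_count_atTop infinite_setOf_rs_eq_one).comp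
    (tendsto_pow_atTop_atTop_of_one_lt one_lt_two)).frequently
    (((frequently_sqrt_two_pow_le_norm_rsPoly hz).and_eventually h_large).mono ?_)
  rintro m ⟨h_poly, h_m⟩
  have h_rsPoly := norm_rsPoly_le hz hz1 (2 ^ m)
  have h_count : √(Nat.count (rs · = 1) (2 ^ m) : ℝ) ≤ √(2 ^ m) :=
    Real.sqrt_le_sqrt (by exact_mod_cast Nat.count_le _)
  have h_div : 8 / ‖z - 1‖ = 4 * (2 / ‖z - 1‖) := by ring
  calc √(Nat.count (rs · = 1) (2 ^ m) : ℝ) ≤ √(2 ^ m) := h_count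
    _ ≤ 8 * ‖∑ n ∈ Icc 1 (Nat.count (rs · = 1) (2 ^ m)), z ^ rsInt n‖ := by linarith

end ExponentialSum

section Koksma

/-- The counting function `A_N(β)` of the first `N` points `x 1, ..., x N`, with the interval
`[0, β)` encoded as in `starDisc`. -/
noncomputable def pointCount (N : ℕ) (x : ℕ → ℝ) (β : ℝ) : ℕ :=
  ((Icc 1 N).filter fun n => 0 ≤ x n ∧ x n < β).card

lemma pointCount_le (N : ℕ) (x : ℕ → ℝ) (β : ℝ) : pointCount N x β ≤ N :=
  (card_filter_le _ _).trans_eq (by simp)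

lemma bddAbove_range_abs_pointCount_div_sub (N : ℕ) (x : ℕ → ℝ) :
    BddAbove (Set.range fun β : Set.Ioc (0 : ℝ) 1 => |(pointCount N x β : ℝ) / N - β|) := by
  refine ⟨1, ?_⟩
  rintro _ ⟨⟨β, hβ_pos, hβ_le⟩, rfl⟩
  have h_le : (pointCount N x β : ℝ) / N ≤ 1 :=
    div_le_one_of_le₀ (by exact_mod_cast pointCount_le N x β) N.cast_nonneg
  exact abs_sub_le_of_nonneg_of_le (by positivity) h_le hβ_pos.le hβ_le

lemma abs_pointCount_sub_mul_le (N : ℕ) (x : ℕ → ℝ) {β : ℝ} (hβ : β ∈ Set.Ioc 0 1) :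
    |(pointCount N x β : ℝ) - N * β| ≤ N * starDisc N x := by
  rcases N.eq_zero_or_pos with rfl | hN
  · simp [pointCount]
  have hN' : (0 : ℝ) < N := by exact_mod_cast hN
  calc |(pointCount N x β : ℝ) - N * β| = N * |(pointCount N x β : ℝ) / N - β| := by
        rw [← abs_of_pos hN', ← abs_mul, abs_of_pos hN', mul_sub, mul_div_cancel₀ _ hN'.ne']
    _ ≤ N * starDisc N x := by
        gcongr
        exact le_ciSup (bddAbove_range_abs_pointCount_div_sub N x) ⟨β, hβ⟩

variable {E : Type*} [NormedAddCommGroup E] [NormedSpace ℝ E] {f f' : ℝ → E}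

lemma sum_indicator_Ioi_eq_pointCount_smul {N : ℕ} {x : ℕ → ℝ} (hx : ∀ n ∈ Icc 1 N, 0 ≤ x n)
    (g : ℝ → E) (t : ℝ) :
    ∑ n ∈ Icc 1 N, (Set.Ioi (x n)).indicator g t = (pointCount N x t : ℝ) • g t := by
  have h_filter : {n ∈ Icc 1 N | 0 ≤ x n ∧ x n < t} = {n ∈ Icc 1 N | x n < t} :=
    filter_congr fun n hn => and_iff_right (hx n hn)
  rw [pointCount, h_filter, Nat.cast_smul_eq_nsmul, ← sum_const, sum_filter]
  rfl

variable [CompleteSpace E]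

lemma integral_indicator_Ioi_deriv (hf : ∀ t ∈ Set.Icc 0 1, HasDerivAt f (f' t) t)
    (hf' : IntervalIntegrable f' volume 0 1) {a : ℝ} (ha : a ∈ Set.Icc 0 1) :
    ∫ t in (0 : ℝ)..1, (Set.Ioi a).indicator f' t = f 1 - f a := by
  have h_subset : Set.uIcc a 1 ⊆ Set.Icc 0 1 := by
    rw [Set.uIcc_of_le ha.2]
    exact Set.Icc_subset_Icc_left ha.1
  rw [intervalIntegral.integral_of_le zero_le_one, setIntegral_indicator measurableSet_Ioi,
    Set.Ioc_inter_Ioi, max_eq_right ha.1, ← intervalIntegral.integral_of_le ha.2]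
  exact intervalIntegral.integral_eq_sub_of_hasDerivAt (fun t ht => hf t (h_subset ht))
    (hf'.mono_set (by rwa [Set.uIcc_of_le zero_le_one]))

lemma integral_smul_deriv_unitInterval (hf : ∀ t ∈ Set.Icc 0 1, HasDerivAt f (f' t) t)
    (hf' : IntervalIntegrable f' volume 0 1) :
    ∫ t in (0 : ℝ)..1, t • f' t = f 1 - ∫ t in (0 : ℝ)..1, f t := by
  rw [← Set.uIcc_of_le zero_le_one] at hf
  simpa using intervalIntegral.integral_smul_deriv_eq_deriv_smul (fun t _ => hasDerivAt_id' t) hf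
    intervalIntegrable_const hf'

lemma integral_pointCount_sub_mul_smul_deriv (hf : ∀ t ∈ Set.Icc 0 1, HasDerivAt f (f' t) t)
    (hf' : IntervalIntegrable f' volume 0 1) {N : ℕ} {x : ℕ → ℝ}
    (hx : ∀ n ∈ Icc 1 N, x n ∈ Set.Icc 0 1) :
    ∫ t in (0 : ℝ)..1, ((pointCount N x t : ℝ) - N * t) • f' t
      = (N : ℝ) • (∫ t in (0 : ℝ)..1, f t) - ∑ n ∈ Icc 1 N, f (x n) := by
  have h_indicator (n : ℕ) : IntervalIntegrable ((Set.Ioi (x n)).indicator f') volume 0 1 := by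
    rw [intervalIntegrable_iff] at hf' ⊢
    exact hf'.indicator measurableSet_Ioi
  have h_sum : IntervalIntegrable
      (fun t => ∑ n ∈ Icc 1 N, (Set.Ioi (x n)).indicator f' t) volume 0 1 := by
    simpa only [sum_fn] using IntervalIntegrable.sum (Icc 1 N) fun n _ => h_indicator n
  have h_id : IntervalIntegrable (fun t => (N : ℝ) • t • f' t) volume 0 1 :=
    (hf'.continuousOn_smul continuousOn_id).smul (N : ℝ)
  simp only [sub_smul, mul_smul,
    ← sum_indicator_Ioi_eq_pointCount_smul fun n hn => (hx n hn).1]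
  rw [intervalIntegral.integral_sub h_sum h_id,
    intervalIntegral.integral_finsetSum fun n _ => h_indicator n,
    intervalIntegral.integral_smul, integral_smul_deriv_unitInterval hf hf',
    sum_congr rfl fun n hn => integral_indicator_Ioi_deriv hf hf' (hx n hn), sum_sub_distrib,
    sum_const, Nat.card_Icc, add_tsub_cancel_right, ← Nat.cast_smul_eq_nsmul ℝ]
  module

theorem koksma_inequality (hf : ∀ t ∈ Set.Icc 0 1, HasDerivAt f (f' t) t)
    (hf' : IntervalIntegrable f' volume 0 1) {N : ℕ} {x : ℕ → ℝ}
    (hx : ∀ n ∈ Icc 1 N, x n ∈ Set.Icc 0 1) :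
    ‖∑ n ∈ Icc 1 N, f (x n) - (N : ℝ) • ∫ t in (0 : ℝ)..1, f t‖
      ≤ N * starDisc N x * ∫ t in (0 : ℝ)..1, ‖f' t‖ := by
  rw [norm_sub_rev, ← integral_pointCount_sub_mul_smul_deriv hf hf' hx,
    ← intervalIntegral.integral_const_mul]
  refine intervalIntegral.norm_integral_le_of_norm_le zero_le_one (.of_forall fun t ht => ?_)
    (hf'.norm.const_mul _)
  rw [norm_smul, Real.norm_eq_abs]
  gcongr
  exact abs_pointCount_sub_mul_le N x ht

end Koksma

section FourierChar

lemma integral_fourierChar_unitInterval : ∫ t in (0 : ℝ)..1, (𝐞 t : ℂ) = 0 := by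
  have h := intervalIntegral.integral_eq_sub_of_hasDerivAt (a := 0) (b := 1)
    (fun t _ => Real.hasDerivAt_fourierChar t)
    (Continuous.intervalIntegrable (by fun_prop) _ _)
  rw [intervalIntegral.integral_const_mul] at h
  simpa [Real.fourierChar_apply] using h

lemma norm_sum_fourierChar_le_starDisc {N : ℕ} {x : ℕ → ℝ} (hx : ∀ n ∈ Icc 1 N, x n ∈ Set.Icc 0 1) :
    ‖∑ n ∈ Icc 1 N, (𝐞 (x n) : ℂ)‖ ≤ 2 * Real.pi * (N * starDisc N x) := by
  have norm_deriv (t : ℝ) : ‖2 * Real.pi * Complex.I * (𝐞 t : ℂ)‖ = 2 * Real.pi := by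
    rw [norm_mul, Circle.norm_coe, mul_one]
    simp [Real.pi_pos.le]
  have h := koksma_inequality (fun t _ => Real.hasDerivAt_fourierChar t)
    (Continuous.intervalIntegrable (by fun_prop) _ _) hx
  simp only [norm_deriv, intervalIntegral.integral_const, integral_fourierChar_unitInterval,
    smul_zero, sub_zero, one_smul] at h
  rwa [mul_comm]

lemma fourierChar_fract_natCast_mul (k : ℕ) (α : ℝ) : 𝐞 (Int.fract (k * α)) = 𝐞 α ^ k := by
  have h_int (j : ℤ) : 𝐞 (j : ℝ) = 1 := by
    rw [Real.fourierChar_apply', mul_comm]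
    exact Circle.exp_int_mul_two_pi j
  rw [Int.fract, AddChar.map_sub_eq_div, h_int, div_one, ← nsmul_eq_mul, AddChar.map_nsmul_eq_pow]

end FourierChar

lemma frequently_rpow_le_of_frequently_sqrt_le {u : ℕ → ℝ} {C : ℝ} (hC : 0 < C)
    (hu : ∃ᶠ N : ℕ in atTop, √N ≤ C * u N) {ε : ℝ} (hε : 0 < ε) :
    ∃ᶠ N : ℕ in atTop, (N : ℝ) ^ ((1 : ℝ) / 2 - ε) ≤ u N := by
  have h_small : ∀ᶠ N : ℕ in atTop, C * (N : ℝ) ^ (-ε) < 1 := by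
    have h := ((tendsto_rpow_neg_atTop hε).comp tendsto_natCast_atTop_atTop).const_mul C
    rw [mul_zero] at h
    exact h.eventually_lt_const one_pos
  refine (hu.and_eventually (h_small.and (eventually_gt_atTop 0))).mono ?_
  rintro N ⟨hN, hN_small, hN_pos⟩
  refine le_of_mul_le_mul_left ?_ hC
  calc C * (N : ℝ) ^ ((1 : ℝ) / 2 - ε) = C * (N : ℝ) ^ (-ε) * √N := by
        rw [Real.sqrt_eq_rpow, mul_assoc, ← Real.rpow_add (by exact_mod_cast hN_pos),
          neg_add_eq_sub]
    _ ≤ √N := mul_le_of_le_one_left (Real.sqrt_nonneg _) hN_small.le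
    _ ≤ C * u N := hN

theorem stmt8_general (α : ℝ) : ∃ᶠ N : ℕ in atTop,
    √N ≤ 16 * Real.pi * (N * starDisc N fun n => Int.fract ((rsInt n : ℝ) * α)) := by
  refine (frequently_sqrt_le_norm_sum_pow_rsInt (Circle.norm_coe (𝐞 α))).mono fun N hN => ?_
  have h_fract (n : ℕ) : Int.fract ((rsInt n : ℝ) * α) ∈ Set.Icc 0 1 :=
    ⟨Int.fract_nonneg _, (Int.fract_lt_one _).le⟩
  have h_koksma := norm_sum_fourierChar_le_starDisc (N := N) fun n _ => h_fract n
  simp only [fourierChar_fract_natCast_mul, Circle.coe_pow] at h_koksma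
  linarith

theorem stmt8 :
    ∀ᵐ α ∂(volume : Measure ℝ), ∀ ε > 0, ∃ᶠ N : ℕ in atTop,
      (N : ℝ) * starDisc N (fun n => Int.fract ((rsInt n : ℝ) * α)) ≥
        (N : ℝ) ^ ((1 : ℝ) / 2 - ε) := by
  refine .of_forall fun α ε hε => ?_
  exact frequently_rpow_le_of_frequently_sqrt_le (by positivity) (stmt8_general α) hε
end

section
/- Let A > 0 and B > 0, and let (R_L)_{L≥0} be a sequence of measurable subsets of [0,1) such that the Lebesgue measure satisfies P(R_L) ≥ B^{−L} for all L, and such that each R_L is a disjoint union of at most A^{L²} intervals. Then for Lebesgue-almost all α ∈ [0,1), for every η > 0 there are infinitely many L for which there exists a positive integer h_L with h_L ≤ (1+η)^L / P(R_L) and {h_L α} ∈ R_L. -/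
open Filter MeasureTheory

/-!
Fix `η > 0`, write `f` for the indicator function of `R_L`, `m = P(R_L)` and `X = (1 + η) ^ L / m`.
The sum of `f(pα)` over the primes `p ≤ X` has mean `π(X) m`. The frequencies of the dilate `f(pα)`
are multiples of `p`, so at frequency `n` only the dilates by prime divisors of `n` overlap, and
Cauchy-Schwarz bounds the variance by `π(X) ∑ (1 + ω(n)) |f̂(n)|²`, the sum being over `n ≠ 0`.
Now `ω(n)` is `O(log |n|)` and `|f̂(n)|` is at most the number of intervals divided by `|n|`, hence
the variance exceeds `π(X) m` by at most a factor `u_L` growing subexponentially in `L`. By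
Chebyshev's inequality and `π(X) ≫ X / log X`, the probability that no `pα` hits `R_L` is
`O(u_L log X (1 + η) ^ (-L))`, which is summable, and Borel-Cantelli applies.
-/

theorem log_le_two_mul_log_add {x y : ℝ} (hx : 0 < x) (hy : 0 < y) :
    Real.log x ≤ 2 * Real.log y + 2 * (√x / y) := by
  have h : Real.log (√x / y) ≤ √x / y :=
    (Real.log_le_sub_one_of_pos (by positivity)).trans (sub_le_self _ zero_le_one)
  rw [Real.log_div (by positivity) hy.ne', Real.log_sqrt hx.le] at h
  linarith

theorem div_four_le_primeCounting_mul_log {x : ℝ} (hx : 8 ≤ x) :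
    x / 4 ≤ Nat.primeCounting ⌊x⌋₊ * Real.log x := by
  have hpi := Chebyshev.pi_ge' (show 1 < x by linarith)
  rw [div_le_iff₀ (Real.log_pos (by linarith))] at hpi
  have htangent := Real.log_le_sub_one_of_pos (show 0 < (x + 2) / 8 by linarith)
  rw [Real.log_div (by linarith) (by norm_num),
    show (8 : ℝ) = 2 ^ 3 by norm_num, Real.log_pow] at htangent
  push_cast at htangent
  nlinarith [Real.log_two_gt_d9, Real.log_two_lt_d9]

theorem hasSum_ite_dvd {M : Type*} [AddCommMonoid M] [TopologicalSpace M] {g : ℤ → M} {a : M}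
    {p : ℤ} (hp : p ≠ 0) :
    HasSum (fun n => if p ∣ n then g n else 0) a ↔ HasSum (fun n => g (p * n)) a := by
  rw [← (mul_right_injective₀ hp).hasSum_iff]
  · simp only [Function.comp_def, dvd_mul_right, if_true]
  · rintro n hn
    exact if_neg fun ⟨k, hk⟩ => hn ⟨k, hk.symm⟩

theorem integral_norm_sq_indicator_one {X : Type*} [MeasurableSpace X] {μ : Measure X} {s : Set X}
    (hs : MeasurableSet s) : ∫ x, ‖s.indicator (fun _ => (1 : ℂ)) x‖ ^ 2 ∂μ = μ.real s := by
  rw [← integral_indicator_one hs]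
  refine integral_congr_ae (.of_forall fun x => ?_)
  by_cases hx : x ∈ s <;> simp [hx]

theorem ae_eventually_notMem_of_eventually_le_summable {X : Type*} [MeasurableSpace X]
    {μ : Measure X} [IsFiniteMeasure μ] {s : ℕ → Set X} {b : ℕ → ℝ} (hb : Summable b)
    (hs : ∀ᶠ n in atTop, μ.real (s n) ≤ b n) : ∀ᵐ x ∂μ, ∀ᶠ n in atTop, x ∉ s n := by
  have hsum : Summable fun n => μ.real (s n) :=
    .of_norm_bounded_eventually_nat hb <| hs.mono fun n hn => by
      rwa [Real.norm_of_nonneg measureReal_nonneg]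
  exact ae_eventually_notMem (by simpa [ofReal_measureReal] using hsum.tsum_ofReal_ne_top)

theorem ordConnected_ae_eq_Ioc_sInf_sSup {I : Set ℝ} (hI : I.OrdConnected)
    (hbdd : Bornology.IsBounded I) : I =ᵐ[volume] Set.Ioc (sInf I) (sSup I) := by
  rcases I.eq_empty_or_nonempty with rfl | hne
  · simp
  have hIoo : Set.Ioo (sInf I) (sSup I) ⊆ I :=
    IsConnected.Ioo_csInf_csSup_subset ⟨hne, hI.isPreconnected⟩ hbdd.bddBelow hbdd.bddAbove
  have hIcc : I ⊆ Set.Icc (sInf I) (sSup I) := subset_Icc_csInf_csSup hbdd.bddBelow hbdd.bddAbove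
  exact (hIcc.eventuallyLE.trans Ioc_ae_eq_Icc.symm.le).antisymm
    (Ioo_ae_eq_Ioc.symm.le.trans hIoo.eventuallyLE)

theorem norm_setIntegral_exp_mul_le {I : Set ℝ} (hI : I.OrdConnected)
    (hbdd : Bornology.IsBounded I) {c : ℂ} (hc : c ≠ 0) (hre : c.re = 0) :
    ‖∫ x : ℝ in I, Complex.exp (c * x)‖ ≤ 2 / ‖c‖ := by
  have hexp : ∀ t : ℝ, ‖Complex.exp (c * t)‖ = 1 := fun t => by
    simp [Complex.norm_exp, hre]
  rw [setIntegral_congr_set (ordConnected_ae_eq_Ioc_sInf_sSup hI hbdd),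
    ← intervalIntegral.integral_of_le
      (Real.sInf_le_sSup I hbdd.bddBelow hbdd.bddAbove),
    integral_exp_mul_complex hc, norm_div]
  gcongr
  refine (norm_sub_le _ _).trans ?_
  rw [hexp, hexp]
  norm_num

section Subexponential

open Asymptotics

/-- A real sequence is subexponential if it is `O(r ^ L)` for every base `r > 1`. -/
def IsSubexponential (u : ℕ → ℝ) : Prop :=
  ∀ r : ℝ, 1 < r → u =O[atTop] fun L => r ^ L

theorem isSubexponential_natCast_pow (d : ℕ) : IsSubexponential fun L => (L : ℝ) ^ d :=
  fun _ hr => (isLittleO_pow_const_const_pow_of_one_lt d hr).isBigO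

theorem isSubexponential_const (c : ℝ) : IsSubexponential fun _ => c := fun r hr => by
  refine IsBigO.of_bound |c| (.of_forall fun L => ?_)
  rw [Real.norm_eq_abs, Real.norm_of_nonneg (by positivity)]
  exact le_mul_of_one_le_right (abs_nonneg c) (one_le_pow₀ hr.le)

namespace IsSubexponential

variable {u v : ℕ → ℝ}

theorem add (hu : IsSubexponential u) (hv : IsSubexponential v) :
    IsSubexponential fun L => u L + v L :=
  fun r hr => (hu r hr).add (hv r hr)

theorem sub (hu : IsSubexponential u) (hv : IsSubexponential v) :
    IsSubexponential fun L => u L - v L :=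
  fun r hr => (hu r hr).sub (hv r hr)

theorem const_mul (hu : IsSubexponential u) (c : ℝ) : IsSubexponential fun L => c * u L :=
  fun r hr => (hu r hr).const_mul_left c

theorem mul (hu : IsSubexponential u) (hv : IsSubexponential v) :
    IsSubexponential fun L => u L * v L := by
  intro r hr
  have hsqrt : 1 < √r := Real.lt_sqrt_of_sq_lt (by simpa using hr)
  simpa only [← mul_pow, Real.mul_self_sqrt (zero_le_one.trans hr.le)] using
    (hu _ hsqrt).mul (hv _ hsqrt)

theorem summable_div_pow (hu : IsSubexponential u) {r : ℝ} (hr : 1 < r) :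
    Summable fun L => u L / r ^ L := by
  obtain ⟨s, hs, hsr⟩ := exists_between hr
  have hs0 : 0 ≤ s := zero_le_one.trans hs.le
  have hr0 : 0 < r := zero_lt_one.trans hr
  refine summable_of_isBigO_nat
    (summable_geometric_of_lt_one (div_nonneg hs0 hr0.le) ((div_lt_one hr0).mpr hsr)) ?_
  simpa only [div_eq_mul_inv, mul_pow, inv_pow] using
    (hu s hs).mul (isBigO_refl (fun L : ℕ => (r ^ L)⁻¹) atTop)

end IsSubexponential

theorem isSubexponential_log_pow_pow (A : ℝ) (d : ℕ) :
    IsSubexponential fun L => Real.log (A ^ L ^ d) := by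
  simpa only [Real.log_pow, Nat.cast_pow, mul_comm] using
    (isSubexponential_natCast_pow d).const_mul (Real.log A)

theorem isSubexponential_log_rpow_neg {B : ℝ} (hB : 0 < B) :
    IsSubexponential fun L => Real.log (B ^ (-(L : ℝ))) := by
  simpa only [Real.log_rpow hB, pow_one, neg_mul_comm, mul_comm, mul_neg, neg_mul] using
    (isSubexponential_natCast_pow 1).const_mul (-Real.log B)

end Subexponential

section DivisorCount

/-- The number of elements of `H` dividing `n`. For a set `H` of primes it measures the overlap
at the frequency `n` between the Fourier supports of the dilates `x ↦ f (p • x)`, `p ∈ H`. -/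
def divisorCount (H : Finset ℕ) (n : ℤ) : ℕ :=
  (H.filter fun q : ℕ => (q : ℤ) ∣ n).card

variable {H : Finset ℕ}

theorem divisorCount_le_card (H : Finset ℕ) (n : ℤ) : divisorCount H n ≤ H.card :=
  Finset.card_filter_le _ _

theorem divisorCount_prime_mul_le (hH : ∀ p ∈ H, p.Prime) {p : ℕ} (hp : p.Prime) (n : ℤ) :
    divisorCount H (p * n) ≤ 1 + divisorCount H n := by
  have hsub : (H.filter fun q : ℕ => (q : ℤ) ∣ p * n) ⊆
      insert p (H.filter fun q : ℕ => (q : ℤ) ∣ n) := by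
    intro q hq
    obtain ⟨hqH, hq⟩ := Finset.mem_filter.mp hq
    rw [Finset.mem_insert, Finset.mem_filter]
    rcases (Nat.prime_iff_prime_int.mp (hH q hqH)).dvd_or_dvd hq with hqp | hqn
    · exact .inl ((Nat.prime_dvd_prime_iff_eq (hH q hqH) hp).mp (by exact_mod_cast hqp))
    · exact .inr ⟨hqH, hqn⟩
  exact ((Finset.card_le_card hsub).trans (Finset.card_insert_le _ _)).trans_eq (add_comm _ _)

theorem two_pow_divisorCount_le_natAbs (hH : ∀ p ∈ H, p.Prime) {n : ℤ} (hn : n ≠ 0) :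
    2 ^ divisorCount H n ≤ n.natAbs := by
  have hn' : n.natAbs ≠ 0 := Int.natAbs_ne_zero.mpr hn
  have hsub : (H.filter fun q : ℕ => (q : ℤ) ∣ n) ⊆ n.natAbs.primeFactors := by
    intro q hq
    obtain ⟨hqH, hqn⟩ := Finset.mem_filter.mp hq
    exact Nat.mem_primeFactors.mpr ⟨hH q hqH, Int.natCast_dvd.mp hqn, hn'⟩
  calc 2 ^ divisorCount H n ≤ 2 ^ n.natAbs.primeFactors.card :=
        Nat.pow_le_pow_right two_pos (Finset.card_le_card hsub)
    _ ≤ ∏ p ∈ n.natAbs.primeFactors, p :=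
        Finset.pow_card_le_prod _ _ _ fun p hp => (Nat.prime_of_mem_primeFactors hp).two_le
    _ ≤ n.natAbs := Nat.le_of_dvd (Nat.pos_of_ne_zero hn') (Nat.prod_primeFactors_dvd _)

theorem divisorCount_le_two_mul_log (hH : ∀ p ∈ H, p.Prime) {n : ℤ} (hn : n ≠ 0) :
    (divisorCount H n : ℝ) ≤ 2 * Real.log |(n : ℝ)| := by
  have hpow : (2 : ℝ) ^ divisorCount H n ≤ |(n : ℝ)| := by
    rw [← Int.cast_abs, ← Nat.cast_natAbs]
    exact_mod_cast two_pow_divisorCount_le_natAbs hH hn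
  have hlog := Real.log_le_log (by positivity) hpow
  rw [Real.log_pow] at hlog
  have hlog_two : 1 / 2 ≤ Real.log 2 := by linarith [Real.log_two_gt_d9]
  have := mul_le_mul_of_nonneg_left hlog_two (divisorCount H n).cast_nonneg'
  linarith

/-- The constant `∑_{n ≠ 0} |n| ^ (-3 / 2)`; the term `n = 0` of the sum is `0` because
`0 ^ (-3 / 2) = 0`. -/
noncomputable def sumAbsRpow : ℝ :=
  ∑' n : ℤ, |(n : ℝ)| ^ (-(3 / 2) : ℝ)

theorem one_add_divisorCount_mul_sq_le (hH : ∀ p ∈ H, p.Prime) {n : ℤ} (hn : n ≠ 0) {a K y : ℝ}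
    (hy : 0 < y) (ha0 : 0 ≤ a) (ha : a ≤ K / |(n : ℝ)|) :
    (1 + divisorCount H n) * a ^ 2 ≤
      (1 + 4 * Real.log y) * a ^ 2 + 4 * (K ^ 2 / y) * |(n : ℝ)| ^ (-(3 / 2) : ℝ) := by
  have hn' : 0 < |(n : ℝ)| := abs_pos.mpr (by exact_mod_cast hn)
  have hweight : (1 + divisorCount H n : ℝ) ≤ 1 + 4 * Real.log y + 4 * (√|(n : ℝ)| / y) := by
    linarith [divisorCount_le_two_mul_log hH hn, log_le_two_mul_log_add hn' hy]
  have hrpow : |(n : ℝ)| ^ (-(3 / 2) : ℝ) = √|(n : ℝ)| / |(n : ℝ)| ^ 2 := by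
    rw [Real.sqrt_eq_rpow, ← Real.rpow_natCast, ← Real.rpow_sub hn']
    norm_num
  calc (1 + divisorCount H n) * a ^ 2
      ≤ (1 + 4 * Real.log y + 4 * (√|(n : ℝ)| / y)) * a ^ 2 := by gcongr
    _ = (1 + 4 * Real.log y) * a ^ 2 + 4 * (√|(n : ℝ)| / y) * a ^ 2 := by ring
    _ ≤ (1 + 4 * Real.log y) * a ^ 2 + 4 * (√|(n : ℝ)| / y) * (K / |(n : ℝ)|) ^ 2 := by gcongr
    _ = (1 + 4 * Real.log y) * a ^ 2 + 4 * (K ^ 2 / y) * |(n : ℝ)| ^ (-(3 / 2) : ℝ) := by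
        rw [hrpow]
        ring

theorem summable_one_add_divisorCount_mul {b : ℤ → ℝ} (hb0 : ∀ n, 0 ≤ b n) (hb : Summable b)
    (H : Finset ℕ) : Summable fun n => (1 + divisorCount H n : ℝ) * b n := by
  refine Summable.of_nonneg_of_le (fun n => mul_nonneg (by positivity) (hb0 n)) (fun n => ?_)
    (hb.mul_left (1 + H.card : ℝ))
  have := divisorCount_le_card H n
  have := hb0 n
  gcongr

/- The weight is unbounded in `n` only logarithmically, so it is harmless up to `|n| = y ^ 2`;
beyond that the decay `a n ≤ K / |n|` takes over. -/
theorem tsum_one_add_divisorCount_mul_sq_le (hH : ∀ p ∈ H, p.Prime) {a : ℤ → ℝ} {K y : ℝ}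
    (hy : 0 < y) (ha0 : a 0 = 0) (ha_nonneg : ∀ n, 0 ≤ a n)
    (ha : ∀ n ≠ 0, a n ≤ K / |(n : ℝ)|) (hsum : Summable fun n => a n ^ 2) :
    ∑' n, (1 + divisorCount H n : ℝ) * a n ^ 2 ≤
      (1 + 4 * Real.log y) * ∑' n, a n ^ 2 + 4 * (K ^ 2 / y) * sumAbsRpow := by
  have htail : Summable fun n : ℤ => |(n : ℝ)| ^ (-(3 / 2) : ℝ) :=
    Real.summable_abs_int_rpow (by norm_num)
  have hbound := (hsum.hasSum.mul_left (1 + 4 * Real.log y)).add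
    (htail.hasSum.mul_left (4 * (K ^ 2 / y)))
  refine hasSum_le (fun n => ?_)
    (summable_one_add_divisorCount_mul (fun n => sq_nonneg (a n)) hsum H).hasSum hbound
  rcases eq_or_ne n 0 with rfl | hn
  · rw [ha0]
    simp
  · exact one_add_divisorCount_mul_sq_le hH hn hy (ha_nonneg n) (ha n hn)

end DivisorCount

section Dilates

open AddCircle

variable {T : ℝ} [Fact (0 < T)]

section FourierCoeff

variable {E : Type*} [NormedAddCommGroup E] [NormedSpace ℂ E] {f : AddCircle T → E}

theorem measurePreserving_nsmul_haarAddCircle {p : ℕ} (hp : p ≠ 0) :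
    MeasurePreserving (fun x : AddCircle T => p • x) haarAddCircle haarAddCircle := by
  simpa only [natCast_zsmul] using
    Measure.measurePreserving_zsmul (haarAddCircle (T := T)) (Nat.cast_ne_zero (R := ℤ).mpr hp)

theorem fourier_period_div_eq_one_iff {p : ℕ} (hp : p ≠ 0) (n : ℤ) :
    fourier n ((T / p : ℝ) : AddCircle T) = 1 ↔ (p : ℤ) ∣ n := by
  have hT : T ≠ 0 := (Fact.out : 0 < T).ne'
  rw [fourier_apply, Circle.coe_eq_one, ← toCircle_zero, (injective_toCircle hT).eq_iff,
    ← addOrderOf_dvd_iff_zsmul_eq_zero, addOrderOf_period_div (Nat.pos_of_ne_zero hp)]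

theorem fourierCoeff_eq_zero_of_periodic {t : AddCircle T} (hf : Function.Periodic f t) {n : ℤ}
    (hn : fourier n t ≠ 1) : fourierCoeff f n = 0 := by
  have hshift : ∀ x, fourier (-n) (x + t) • f (x + t) =
      fourier (-n) t • fourier (-n) x • f x := by
    intro x
    rw [hf x, smul_smul, fourier_apply, smul_add, toCircle_add, Circle.coe_mul, mul_comm]
    rfl
  have hcoeff : fourierCoeff f n = fourier (-n) t • fourierCoeff f n := by
    unfold fourierCoeff
    rw [← integral_smul, ← integral_add_right_eq_self _ t]
    exact integral_congr_ae (.of_forall hshift)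
  have hn' : fourier (-n) t ≠ 1 := by
    rw [fourier_neg]
    exact fun h => hn ((map_eq_one_iff _ (starRingEnd ℂ).injective).mp h)
  by_contra h0
  exact hn' (smul_left_injective ℂ h0 (by simpa using hcoeff.symm))

theorem fourierCoeff_comp_nsmul_mul (hf : AEStronglyMeasurable f haarAddCircle) {p : ℕ}
    (hp : p ≠ 0) (n : ℤ) : fourierCoeff (fun x => f (p • x)) (p * n) = fourierCoeff f n := by
  have hmp := measurePreserving_nsmul_haarAddCircle (T := T) hp
  have hmeas : AEStronglyMeasurable (fun x => fourier (-n) x • f x) haarAddCircle :=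
    (fourier (-n)).continuous.aestronglyMeasurable.smul hf
  unfold fourierCoeff
  conv_rhs => rw [← hmp.map_eq]
  rw [integral_map hmp.measurable.aemeasurable (by rwa [hmp.map_eq])]
  refine integral_congr_ae (.of_forall fun x => ?_)
  simp only [fourier_apply, ← natCast_zsmul x p, smul_smul, neg_mul, mul_comm n]

theorem fourierCoeff_comp_nsmul (hf : AEStronglyMeasurable f haarAddCircle) {p : ℕ}
    (hp : p ≠ 0) (n : ℤ) : fourierCoeff (fun x => f (p • x)) n =
      if (p : ℤ) ∣ n then fourierCoeff f (n / p) else 0 := by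
  split_ifs with hdvd
  · conv_lhs => rw [← Int.mul_ediv_cancel' hdvd]
    exact fourierCoeff_comp_nsmul_mul hf hp _
  · refine fourierCoeff_eq_zero_of_periodic (t := ((T / p : ℝ) : AddCircle T)) (fun x => ?_)
      ((fourier_period_div_eq_one_iff hp n).not.mpr hdvd)
    have hpt : p • ((T / p : ℝ) : AddCircle T) = 0 := by
      rw [← AddCircle.coe_nsmul, nsmul_eq_mul, mul_div_cancel₀ T (Nat.cast_ne_zero.mpr hp),
        coe_period]
    simp only [smul_add, hpt, add_zero]

theorem fourierCoeff_sum_comp_nsmul (hf : Integrable f haarAddCircle) {H : Finset ℕ}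
    (hH : ∀ p ∈ H, p ≠ 0) (n : ℤ) : fourierCoeff (fun x => ∑ p ∈ H, f (p • x)) n =
      ∑ p ∈ H with ((p : ℕ) : ℤ) ∣ n, fourierCoeff f (n / p) := by
  have hsum := congrFun (fourierCoeff.sum H (fun p x => f (p • x)) fun p hp =>
    (measurePreserving_nsmul_haarAddCircle (hH p hp)).integrable_comp_of_integrable hf) n
  rw [Finset.sum_apply, Finset.sum_congr rfl fun p hp =>
    fourierCoeff_comp_nsmul hf.1 (hH p hp) n, ← Finset.sum_filter] at hsum
  rw [← hsum]
  congr 1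
  funext x
  simp only [Finset.sum_apply]

theorem norm_sq_fourierCoeff_sum_comp_nsmul_le (hf : Integrable f haarAddCircle)
    {H : Finset ℕ} (hH : ∀ p ∈ H, p ≠ 0) (n : ℤ) :
    ‖fourierCoeff (fun x => ∑ p ∈ H, f (p • x)) n‖ ^ 2 ≤
      ∑ p ∈ H, if (p : ℤ) ∣ n then divisorCount H n * ‖fourierCoeff f (n / p)‖ ^ 2 else 0 := by
  rw [fourierCoeff_sum_comp_nsmul hf hH, ← Finset.sum_filter, ← Finset.mul_sum]
  calc _ ≤ (∑ p ∈ H with ((p : ℕ) : ℤ) ∣ n, ‖fourierCoeff f (n / p)‖) ^ 2 := by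
        gcongr
        exact norm_sum_le _ _
    _ ≤ _ := sq_sum_le_card_mul_sum_sq

theorem fourierCoeff_const (c : E) {n : ℤ} (hn : n ≠ 0) :
    fourierCoeff (fun _ : AddCircle T => c) n = 0 := by
  refine fourierCoeff_eq_zero_of_periodic (fun _ => rfl)
    ((fourier_period_div_eq_one_iff (p := n.natAbs + 1) n.natAbs.succ_ne_zero n).not.mpr ?_)
  exact fun hdvd => hn (Int.eq_zero_of_dvd_of_natAbs_lt_natAbs hdvd n.natAbs.lt_succ_self)

theorem fourierCoeff_sub_const (hf : Integrable f haarAddCircle) (c : E) {n : ℤ} (hn : n ≠ 0) :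
    fourierCoeff (fun x => f x - c) n = fourierCoeff f n := by
  have hadd := congrFun (fourierCoeff.add (hf.sub (integrable_const c)) (integrable_const c)) n
  simp only [Pi.add_apply, fourierCoeff_const c hn, add_zero] at hadd
  conv_rhs => rw [← sub_add_cancel f (fun _ => c)]
  exact hadd.symm

theorem fourierCoeff_zero_eq_integral (f : AddCircle T → E) :
    fourierCoeff f 0 = ∫ x, f x ∂haarAddCircle := by
  simp [fourierCoeff]

end FourierCoeff

variable {f : AddCircle T → ℂ}

theorem hasSum_sq_fourierCoeff_of_memLp (hf : MemLp f 2 haarAddCircle) :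
    HasSum (fun n => ‖fourierCoeff f n‖ ^ 2) (∫ x, ‖f x‖ ^ 2 ∂haarAddCircle) := by
  have h := hasSum_sq_fourierCoeff hf.toLp
  rw [fourierCoeff_congr_ae hf.coeFn_toLp] at h
  convert h using 1
  exact integral_congr_ae (hf.coeFn_toLp.mono fun x hx => by simp only [hx])

theorem memLp_sum_comp_nsmul (hf : MemLp f 2 haarAddCircle) {H : Finset ℕ} (hH : ∀ p ∈ H, p ≠ 0) :
    MemLp (fun x => ∑ p ∈ H, f (p • x)) 2 haarAddCircle :=
  memLp_finsetSum H fun p hp =>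
    hf.comp_measurePreserving (measurePreserving_nsmul_haarAddCircle (hH p hp))

theorem integral_norm_sq_sum_comp_nsmul_le (hf : MemLp f 2 haarAddCircle) {H : Finset ℕ}
    (hH : ∀ p ∈ H, p.Prime) :
    ∫ x, ‖∑ p ∈ H, f (p • x)‖ ^ 2 ∂haarAddCircle ≤
      H.card * ∑' n : ℤ, (1 + divisorCount H n) * ‖fourierCoeff f n‖ ^ 2 := by
  have hH0 : ∀ p ∈ H, p ≠ 0 := fun p hp => (hH p hp).ne_zero
  have hsum := summable_one_add_divisorCount_mul (fun n => sq_nonneg ‖fourierCoeff f n‖)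
    (hasSum_sq_fourierCoeff_of_memLp hf).summable H
  have hweight : ∀ p ∈ H, ∀ n : ℤ, (divisorCount H (p * n) : ℝ) * ‖fourierCoeff f n‖ ^ 2 ≤
      (1 + divisorCount H n) * ‖fourierCoeff f n‖ ^ 2 := fun p hp n => by
    gcongr
    exact_mod_cast divisorCount_prime_mul_le hH (hH p hp) n
  have hdilate : ∀ p ∈ H, Summable fun n : ℤ =>
      (divisorCount H (p * n) : ℝ) * ‖fourierCoeff f n‖ ^ 2 := fun p hp =>
    hsum.of_nonneg_of_le (fun n => by positivity) (hweight p hp)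
  have hreindex : ∀ p ∈ H, HasSum (fun n : ℤ =>
      if (p : ℤ) ∣ n then divisorCount H n * ‖fourierCoeff f (n / p)‖ ^ 2 else 0)
      (∑' n : ℤ, (divisorCount H (p * n) : ℝ) * ‖fourierCoeff f n‖ ^ 2) := fun p hp => by
    have hp0 : (p : ℤ) ≠ 0 := Nat.cast_ne_zero.mpr (hH0 p hp)
    rw [hasSum_ite_dvd hp0]
    simpa only [Int.mul_ediv_cancel_left _ hp0] using (hdilate p hp).hasSum
  calc ∫ x, ‖∑ p ∈ H, f (p • x)‖ ^ 2 ∂haarAddCircle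
      ≤ ∑ p ∈ H, ∑' n : ℤ, (divisorCount H (p * n) : ℝ) * ‖fourierCoeff f n‖ ^ 2 :=
        hasSum_le (norm_sq_fourierCoeff_sum_comp_nsmul_le (hf.integrable one_le_two) hH0)
          (hasSum_sq_fourierCoeff_of_memLp (memLp_sum_comp_nsmul hf hH0)) (hasSum_sum hreindex)
    _ ≤ ∑ _p ∈ H, ∑' n : ℤ, (1 + divisorCount H n) * ‖fourierCoeff f n‖ ^ 2 :=
        Finset.sum_le_sum fun p hp => (hdilate p hp).tsum_le_tsum (hweight p hp) hsum
    _ = H.card * ∑' n : ℤ, (1 + divisorCount H n) * ‖fourierCoeff f n‖ ^ 2 := by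
        rw [Finset.sum_const, nsmul_eq_mul]

theorem integral_norm_sq_sum_comp_nsmul_sub_integral_le (hf : MemLp f 2 haarAddCircle)
    {H : Finset ℕ} (hH : ∀ p ∈ H, p.Prime) {K y : ℝ} (hy : 1 ≤ y)
    (hK : ∀ n ≠ 0, ‖fourierCoeff f n‖ ≤ K / |(n : ℝ)|) :
    ∫ x, ‖∑ p ∈ H, (f (p • x) - ∫ z, f z ∂haarAddCircle)‖ ^ 2 ∂haarAddCircle ≤
      H.card * ((1 + 4 * Real.log y) * ∫ x, ‖f x‖ ^ 2 ∂haarAddCircle +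
        4 * (K ^ 2 / y) * sumAbsRpow) := by
  set g : AddCircle T → ℂ := fun x => f x - ∫ z, f z ∂haarAddCircle with hg
  have hint : Integrable f haarAddCircle := hf.integrable one_le_two
  have hgL : MemLp g 2 haarAddCircle := hf.sub (memLp_const _)
  have hg0 : fourierCoeff g 0 = 0 := by
    rw [fourierCoeff_zero_eq_integral, hg, integral_sub hint (integrable_const _)]
    simp
  have hgn : ∀ n ≠ 0, fourierCoeff g n = fourierCoeff f n := fun n =>
    fourierCoeff_sub_const hint _
  have hnorm : ∀ n, ‖fourierCoeff g n‖ ≤ ‖fourierCoeff f n‖ := fun n => by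
    rcases eq_or_ne n 0 with rfl | hn
    · rw [hg0, norm_zero]
      exact norm_nonneg _
    · rw [hgn n hn]
  have hgsum := hasSum_sq_fourierCoeff_of_memLp hgL
  have henergy : ∑' n, ‖fourierCoeff g n‖ ^ 2 ≤ ∫ x, ‖f x‖ ^ 2 ∂haarAddCircle :=
    hasSum_le (fun n => by gcongr; exact hnorm n) hgsum.summable.hasSum
      (hasSum_sq_fourierCoeff_of_memLp hf)
  have hlog : 0 ≤ Real.log y := Real.log_nonneg hy
  refine (integral_norm_sq_sum_comp_nsmul_le hgL hH).trans ?_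
  gcongr
  refine (tsum_one_add_divisorCount_mul_sq_le hH (zero_lt_one.trans_le hy) (by rw [hg0, norm_zero])
    (fun n => norm_nonneg _) (fun n hn => (hgn n hn).symm ▸ hK n hn) hgsum.summable).trans ?_
  gcongr

end Dilates

section HittingTimes

open AddCircle

variable {T : ℝ} [Fact (0 < T)] {S : Set (AddCircle T)}

theorem mul_measureReal_forall_nsmul_notMem_le (hS : MeasurableSet S) {H : Finset ℕ}
    (hH : ∀ p ∈ H, p ≠ 0) :
    (H.card * haarAddCircle.real S) ^ 2 * haarAddCircle.real {x | ∀ p ∈ H, p • x ∉ S} ≤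
      ∫ x, ‖∑ p ∈ H, (S.indicator (fun _ => (1 : ℂ)) (p • x) -
        ∫ z, S.indicator (fun _ => (1 : ℂ)) z ∂haarAddCircle)‖ ^ 2 ∂haarAddCircle := by
  set f : AddCircle T → ℂ := S.indicator fun _ => 1
  set c : ℂ := ∫ z, f z ∂haarAddCircle with hc
  have hfL : MemLp f 2 haarAddCircle := memLp_indicator_const 2 hS 1 (.inr (measure_ne_top _ _))
  have hint : Integrable (fun x => ‖∑ p ∈ H, (f (p • x) - c)‖ ^ 2) haarAddCircle :=
    (memLp_sum_comp_nsmul (hfL.sub (memLp_const c)) hH).integrable_norm_pow two_ne_zero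
  have hchebyshev := mul_meas_ge_le_integral_of_nonneg (.of_forall fun x => by positivity) hint
    ((H.card * haarAddCircle.real S) ^ 2)
  refine (mul_le_mul_of_nonneg_left (measureReal_mono fun x hx => ?_) (sq_nonneg _)).trans
    hchebyshev
  have hmiss : ∀ p ∈ H, f (p • x) - c = -(haarAddCircle.real S : ℂ) := fun p hp => by
    have hfp : f (p • x) = 0 := Set.indicator_of_notMem (hx p hp) _
    rw [hfp, hc, integral_indicator_const _ hS, zero_sub, Complex.real_smul, mul_one]
  rw [Set.mem_ofPred_eq, Finset.sum_congr rfl hmiss, Finset.sum_const, nsmul_eq_mul, mul_neg,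
    norm_neg, norm_mul, Complex.norm_natCast, Complex.norm_of_nonneg measureReal_nonneg]

theorem measureReal_forall_nsmul_notMem_le (hS : MeasurableSet S)
    (hpos : 0 < haarAddCircle.real S) {K : ℝ} (hK : 1 ≤ K)
    (hcoeff : ∀ n ≠ 0, ‖fourierCoeff (S.indicator fun _ => (1 : ℂ)) n‖ ≤ K / |(n : ℝ)|)
    {H : Finset ℕ} (hH : ∀ p ∈ H, p.Prime) (hne : H.Nonempty) :
    haarAddCircle.real {x | ∀ p ∈ H, p • x ∉ S} ≤
      (1 + 4 * sumAbsRpow + 4 * Real.log (K ^ 2 / haarAddCircle.real S)) /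
        (H.card * haarAddCircle.real S) := by
  set m := haarAddCircle.real S
  have : (0 : ℝ) < H.card := by exact_mod_cast hne.card_pos
  have hy : 1 ≤ K ^ 2 / m :=
    (one_le_div hpos).mpr (measureReal_le_one.trans (one_le_pow₀ hK))
  have hvariance := (mul_measureReal_forall_nsmul_notMem_le hS fun p hp => (hH p hp).ne_zero).trans
    (integral_norm_sq_sum_comp_nsmul_sub_integral_le
      (memLp_indicator_const 2 hS 1 (.inr (measure_ne_top _ _))) hH hy hcoeff)
  rw [integral_norm_sq_indicator_one hS, div_div_cancel₀ (by positivity)] at hvariance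
  rw [le_div_iff₀ (by positivity)]
  refine le_of_mul_le_mul_left ?_ (show 0 < H.card * m by positivity)
  linear_combination hvariance

theorem measureReal_forall_prime_nsmul_notMem_le (hS : MeasurableSet S)
    (hpos : 0 < haarAddCircle.real S) {K : ℝ} (hK : 1 ≤ K)
    (hcoeff : ∀ n ≠ 0, ‖fourierCoeff (S.indicator fun _ => (1 : ℂ)) n‖ ≤ K / |(n : ℝ)|)
    {x : ℝ} (hx : 8 ≤ x) :
    haarAddCircle.real {t | ∀ p : ℕ, p.Prime → (p : ℝ) ≤ x → p • t ∉ S} ≤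
      4 * (1 + 4 * sumAbsRpow + 4 * Real.log (K ^ 2 / haarAddCircle.real S)) * Real.log x /
        (x * haarAddCircle.real S) := by
  have hx0 : 0 < x := by linarith
  have hmem : ∀ p, p ∈ Nat.primesLE ⌊x⌋₊ ↔ (p : ℝ) ≤ x ∧ p.Prime := fun p => by
    rw [Nat.mem_primesLE, Nat.le_floor_iff hx0.le]
  have hne : (Nat.primesLE ⌊x⌋₊).Nonempty :=
    ⟨2, (hmem 2).mpr ⟨by push_cast; linarith, Nat.prime_two⟩⟩
  have hbound := measureReal_forall_nsmul_notMem_le hS hpos hK hcoeff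
    (fun p hp => ((hmem p).mp hp).2) hne
  have hprimes := div_four_le_primeCounting_mul_log hx
  rw [← Nat.primesLE_card_eq_primeCounting] at hprimes
  have hcard : (0 : ℝ) < (Nat.primesLE ⌊x⌋₊).card := by exact_mod_cast hne.card_pos
  have hset : {t | ∀ p : ℕ, p.Prime → (p : ℝ) ≤ x → p • t ∉ S} =
      {t | ∀ p ∈ Nat.primesLE ⌊x⌋₊, p • t ∉ S} := by
    ext t
    simp only [hmem, and_comm, and_imp, Set.mem_ofPred_eq]
  rw [hset]
  rw [le_div_iff₀ (by positivity)] at hbound ⊢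
  calc haarAddCircle.real {t | ∀ p ∈ Nat.primesLE ⌊x⌋₊, p • t ∉ S} * (x * haarAddCircle.real S)
      = 4 * (haarAddCircle.real {t | ∀ p ∈ Nat.primesLE ⌊x⌋₊, p • t ∉ S} *
          haarAddCircle.real S) * (x / 4) := by ring
    _ ≤ 4 * (haarAddCircle.real {t | ∀ p ∈ Nat.primesLE ⌊x⌋₊, p • t ∉ S} *
          haarAddCircle.real S) * ((Nat.primesLE ⌊x⌋₊).card * Real.log x) := by gcongr
    _ = 4 * (haarAddCircle.real {t | ∀ p ∈ Nat.primesLE ⌊x⌋₊, p • t ∉ S} *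
          ((Nat.primesLE ⌊x⌋₊).card * haarAddCircle.real S)) * Real.log x := by ring
    _ ≤ _ := by
      have := Real.log_nonneg (show 1 ≤ x by linarith)
      gcongr

theorem measureReal_forall_prime_le_div_nsmul_notMem_le (hS : MeasurableSet S) {v : ℝ} (hv : 0 < v)
    (hmeasure : v ≤ haarAddCircle.real S) {K : ℝ} (hK : 1 ≤ K)
    (hcoeff : ∀ n ≠ 0, ‖fourierCoeff (S.indicator fun _ => (1 : ℂ)) n‖ ≤ K / |(n : ℝ)|)
    {y : ℝ} (hy : 8 ≤ y) :
    haarAddCircle.real {t | ∀ p : ℕ, p.Prime → (p : ℝ) ≤ y / haarAddCircle.real S → p • t ∉ S} ≤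
      4 * (1 + 4 * sumAbsRpow + 4 * (2 * Real.log K - Real.log v)) *
        (Real.log y - Real.log v) / y := by
  set m := haarAddCircle.real S
  have hm : 0 < m := hv.trans_le hmeasure
  have hm1 : m ≤ 1 := measureReal_le_one
  have hy_div : 8 ≤ y / m := hy.trans (le_div_self (by linarith) hm hm1)
  have hlogm : Real.log v ≤ Real.log m := Real.log_le_log hv hmeasure
  have hlogK : Real.log (K ^ 2 / m) ≤ 2 * Real.log K - Real.log v := by
    rw [Real.log_div (by positivity) hm.ne', Real.log_pow, Nat.cast_ofNat]
    linarith
  have hlogK_nonneg : 0 ≤ Real.log (K ^ 2 / m) :=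
    Real.log_nonneg ((one_le_div hm).mpr (hm1.trans (one_le_pow₀ hK)))
  have hlogy : Real.log (y / m) ≤ Real.log y - Real.log v := by
    rw [Real.log_div (by linarith) hm.ne']
    linarith
  have hlogy_nonneg : 0 ≤ Real.log (y / m) := Real.log_nonneg (by linarith)
  have hC : 0 ≤ sumAbsRpow := tsum_nonneg fun n => by positivity
  have hbound := measureReal_forall_prime_nsmul_notMem_le hS hm hK hcoeff hy_div
  rw [div_mul_cancel₀ _ hm.ne'] at hbound
  refine hbound.trans ?_
  gcongr
  linarith

theorem ae_eventually_exists_prime_nsmul_mem {S : ℕ → Set (AddCircle T)}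
    (hS : ∀ L, MeasurableSet (S L)) {K v : ℕ → ℝ} (hK : ∀ L, 1 ≤ K L) (hv : ∀ L, 0 < v L)
    (hlogK : IsSubexponential fun L => Real.log (K L))
    (hlogv : IsSubexponential fun L => Real.log (v L))
    (hmeasure : ∀ L, v L ≤ haarAddCircle.real (S L))
    (hcoeff : ∀ L, ∀ n ≠ 0,
      ‖fourierCoeff ((S L).indicator fun _ => (1 : ℂ)) n‖ ≤ K L / |(n : ℝ)|)
    {r : ℝ} (hr : 1 < r) :
    ∀ᵐ x ∂haarAddCircle, ∀ᶠ L in atTop, ∃ p : ℕ, p.Prime ∧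
      (p : ℝ) ≤ r ^ L / haarAddCircle.real (S L) ∧ p • x ∈ S L := by
  have hmajorant := ((((isSubexponential_const (1 + 4 * sumAbsRpow)).add
    (((hlogK.const_mul 2).sub hlogv).const_mul 4)).const_mul 4).mul
      ((isSubexponential_log_pow_pow r 1).sub hlogv)).summable_div_pow hr
  have hlarge := (tendsto_pow_atTop_atTop_of_one_lt hr).eventually_ge_atTop 8
  have hae := ae_eventually_notMem_of_eventually_le_summable hmajorant <| hlarge.mono fun L hL => by
    simpa only [pow_one] using measureReal_forall_prime_le_div_nsmul_notMem_le (hS L) (hv L)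
      (hmeasure L) (hK L) (hcoeff L) hL
  exact hae.mono fun x hx => hx.mono fun L hL => by
    simpa only [Set.mem_ofPred_eq, not_forall, not_not, exists_prop] using hL

end HittingTimes

section UnionOfIntervals

open AddCircle

variable {T : ℝ} [Fact (0 < T)]

theorem norm_setIntegral_fourier_le {I : Set ℝ} (hI : I.OrdConnected)
    (hbdd : Bornology.IsBounded I) {n : ℤ} (hn : n ≠ 0) :
    ‖∫ x : ℝ in I, fourier n (x : AddCircle T)‖ ≤ T / |(n : ℝ)| := by
  have hT : 0 < T := Fact.out
  have hn' : 0 < |(n : ℝ)| := abs_pos.mpr (Int.cast_ne_zero.mpr hn)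
  set c : ℂ := 2 * Real.pi * Complex.I * n / T with hc
  have hnorm : ‖c‖ = 2 * Real.pi * |(n : ℝ)| / T := by
    simp [hc, abs_of_pos Real.pi_pos, abs_of_pos hT]
  have hre : c.re = 0 := by
    simp [hc, ← Complex.ofReal_intCast]
  have hexp : ∀ x : ℝ, fourier n (x : AddCircle T) = Complex.exp (c * x) := fun x => by
    rw [fourier_coe_apply, hc, mul_div_right_comm]
  have hbound := norm_setIntegral_exp_mul_le hI hbdd
    (norm_pos_iff.mp (by rw [hnorm]; positivity)) hre
  simp only [hexp]
  refine hbound.trans ?_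
  rw [hnorm, div_div_eq_mul_div, mul_assoc, mul_div_mul_left _ _ two_ne_zero]
  gcongr
  exact le_mul_of_one_le_left hn'.le (by linarith [Real.pi_gt_three])

theorem coe_mem_coe_image_iff {a : ℝ} {R : Set ℝ} (hR : R ⊆ Set.Ico a (a + T)) {x : ℝ}
    (hx : x ∈ Set.Ico a (a + T)) : (x : AddCircle T) ∈ ((↑) '' R : Set (AddCircle T)) ↔ x ∈ R := by
  refine ⟨?_, fun h => ⟨x, h, rfl⟩⟩
  rintro ⟨y, hy, hyx⟩
  rwa [← (coe_eq_coe_iff_of_mem_Ico (hR hy) hx).mp hyx]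

theorem measurableSet_coe_image {a : ℝ} {R : Set ℝ} (hR : R ⊆ Set.Ico a (a + T))
    (hmeas : MeasurableSet R) : MeasurableSet ((↑) '' R : Set (AddCircle T)) := by
  have himage : ((↑) '' R : Set (AddCircle T)) =
      (measurableEquivIco T a).symm '' ((↑) ⁻¹' R) := by
    conv_lhs => rw [← Set.inter_eq_right.mpr hR, ← Subtype.image_preimage_coe, Set.image_image]
    rfl
  rw [himage]
  exact (measurableEquivIco T a).symm.measurableSet_image.mpr (measurable_subtype_coe hmeas)

theorem fourierCoeff_indicator_coe_image {a : ℝ} {R : Set ℝ} (hR : R ⊆ Set.Ico a (a + T))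
    (hmeas : MeasurableSet R) (n : ℤ) :
    fourierCoeff (((↑) '' R : Set (AddCircle T)).indicator fun _ => (1 : ℂ)) n =
      (1 / T) • ∫ x in R, fourier (-n) (x : AddCircle T) := by
  rw [fourierCoeff_eq_intervalIntegral _ n a,
    intervalIntegral.integral_of_le (le_add_of_nonneg_right (Fact.out : 0 < T).le),
    setIntegral_congr_set Ico_ae_eq_Ioc.symm]
  conv_rhs => rw [← Set.inter_eq_right.mpr hR, ← setIntegral_indicator hmeas]
  congr 1
  refine setIntegral_congr_fun measurableSet_Ico fun x hx => ?_
  by_cases hxR : x ∈ R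
  · rw [Set.indicator_of_mem hxR, Set.indicator_of_mem ((coe_mem_coe_image_iff hR hx).mpr hxR),
      smul_eq_mul, mul_one]
  · rw [Set.indicator_of_notMem hxR,
      Set.indicator_of_notMem ((coe_mem_coe_image_iff hR hx).not.mpr hxR), smul_zero]

theorem haarAddCircle_real_coe_image {a : ℝ} {R : Set ℝ} (hR : R ⊆ Set.Ico a (a + T))
    (hmeas : MeasurableSet R) :
    haarAddCircle.real ((↑) '' R : Set (AddCircle T)) = volume.real R / T := by
  have h := fourierCoeff_indicator_coe_image hR hmeas 0
  rw [fourierCoeff_zero_eq_integral,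
    integral_indicator_const _ (measurableSet_coe_image hR hmeas)] at h
  simp only [neg_zero, fourier_zero, setIntegral_const, Complex.real_smul, mul_one] at h
  rw [div_eq_mul_inv, mul_comm, ← one_div]
  exact_mod_cast h

theorem norm_fourierCoeff_indicator_coe_image_le {a : ℝ} {R : Set ℝ} (hR : R ⊆ Set.Ico a (a + T))
    {k : ℕ} {I : Fin k → Set ℝ} (hI : ∀ i, (I i).OrdConnected)
    (hdisj : Pairwise fun i j => Disjoint (I i) (I j)) (hunion : R = ⋃ i, I i) {n : ℤ}
    (hn : n ≠ 0) :
    ‖fourierCoeff (((↑) '' R : Set (AddCircle T)).indicator fun _ => (1 : ℂ)) n‖ ≤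
      k / |(n : ℝ)| := by
  have hT : 0 < T := Fact.out
  have hIsub : ∀ i, I i ⊆ Set.Icc a (a + T) := fun i =>
    (Set.subset_iUnion I i).trans (hunion ▸ hR.trans Set.Ico_subset_Icc_self)
  have hmeas : ∀ i, MeasurableSet (I i) := fun i => (hI i).measurableSet
  have hcont : Continuous fun x : ℝ => fourier (-n) (x : AddCircle T) :=
    (fourier (-n)).continuous.comp (AddCircle.continuous_mk' T)
  rw [fourierCoeff_indicator_coe_image hR (hunion ▸ .iUnion hmeas), hunion,
    integral_iUnion_fintype hmeas hdisj fun i => hcont.integrableOn_Icc.mono_set (hIsub i),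
    norm_smul, Real.norm_of_nonneg (by positivity)]
  calc 1 / T * ‖∑ i, ∫ x in I i, fourier (-n) (x : AddCircle T)‖
      ≤ 1 / T * ∑ _i : Fin k, T / |((-n : ℤ) : ℝ)| := by
        gcongr
        refine norm_sum_le_of_le _ fun i _ => ?_
        exact norm_setIntegral_fourier_le (hI i) ((Metric.isBounded_Icc a (a + T)).subset (hIsub i))
          (neg_ne_zero.mpr hn)
    _ = k / |(n : ℝ)| := by
        rw [Finset.sum_const, Finset.card_univ, Fintype.card_fin, nsmul_eq_mul, Int.cast_neg,
          abs_neg]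
        field_simp

theorem ae_coe_of_ae_haarAddCircle {P : AddCircle T → Prop}
    (h : ∀ᵐ x ∂haarAddCircle, P x) : ∀ᵐ α : ℝ, P α := by
  have hT : 0 < T := Fact.out
  have hvolume : ∀ᵐ x : AddCircle T, P x := by
    rw [volume_eq_smul_haarAddCircle]
    exact Measure.ae_smul_measure h _
  have hperiod : ∀ t : ℝ, ∀ᵐ α : ℝ ∂volume.restrict (Set.Ioc t (t + T)), P α :=
    fun t => (AddCircle.measurePreserving_mk T t).quasiMeasurePreserving.ae hvolume
  rw [← Measure.restrict_univ (μ := volume), ← iUnion_Ioc_add_zsmul hT 0,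
    ae_restrict_iUnion_iff]
  intro n
  simpa only [add_smul, one_smul, add_assoc] using hperiod (0 + n • T)

end UnionOfIntervals

section FractionalParts

open AddCircle

theorem coe_mem_coe_image_iff_fract_mem {R : Set ℝ} (hR : R ⊆ Set.Ico 0 1) (x : ℝ) :
    (x : UnitAddCircle) ∈ ((↑) '' R : Set UnitAddCircle) ↔ Int.fract x ∈ R := by
  have hx : Int.fract x ∈ Set.Ico (0 : ℝ) (0 + 1) := by
    rw [zero_add]
    exact ⟨Int.fract_nonneg x, Int.fract_lt_one x⟩
  have hcoe : (x : UnitAddCircle) = Int.fract x := by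
    rw [Int.fract, AddCircle.coe_sub, eq_comm, sub_eq_self, AddCircle.coe_eq_zero_iff]
    exact ⟨⌊x⌋, by rw [zsmul_one]⟩
  rw [hcoe, coe_mem_coe_image_iff (by simpa using hR) hx]

theorem ae_eventually_exists_prime_fract_mem {N v : ℕ → ℝ}
    (hN : IsSubexponential fun L => Real.log (N L))
    (hv : IsSubexponential fun L => Real.log (v L)) (hvpos : ∀ L, 0 < v L)
    {R : ℕ → Set ℝ} (hsub : ∀ L, R L ⊆ Set.Ico 0 1)
    (hvol : ∀ L, ENNReal.ofReal (v L) ≤ volume (R L))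
    (hintervals : ∀ L, ∃ (n : ℕ) (I : Fin n → Set ℝ), (n : ℝ) ≤ N L ∧
      (∀ i, (I i).OrdConnected) ∧ (Pairwise fun i j => Disjoint (I i) (I j)) ∧ R L = ⋃ i, I i)
    {r : ℝ} (hr : 1 < r) :
    ∀ᵐ α : ℝ, ∀ᶠ L in atTop, ∃ p : ℕ, p.Prime ∧
      (p : ℝ) ≤ r ^ L / volume.real (R L) ∧ Int.fract (p * α) ∈ R L := by
  have hsub' : ∀ L, R L ⊆ Set.Ico 0 (0 + 1) := by simpa using hsub
  have hmeas : ∀ L, MeasurableSet (R L) := fun L => by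
    obtain ⟨n, I, -, hI, -, hunion⟩ := hintervals L
    exact hunion ▸ .iUnion fun i => (hI i).measurableSet
  have hvolume : ∀ L, haarAddCircle.real ((↑) '' R L : Set UnitAddCircle) = volume.real (R L) :=
    fun L => by rw [haarAddCircle_real_coe_image (hsub' L) (hmeas L), div_one]
  have hvreal : ∀ L, v L ≤ volume.real (R L) := fun L =>
    (ENNReal.ofReal_le_iff_le_toReal (measure_ne_top_of_subset (hsub L) (by simp))).mp (hvol L)
  have hN_one : ∀ L, 1 ≤ N L := fun L => by
    obtain ⟨n, I, hn, -, -, hunion⟩ := hintervals L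
    have hpos := (hvpos L).trans_le (hvreal L)
    rcases n.eq_zero_or_pos with rfl | hn0
    · simp [hunion] at hpos
    · exact le_trans (by exact_mod_cast hn0) hn
  have hcoeff : ∀ L, ∀ n ≠ 0, ‖fourierCoeff (((↑) '' R L : Set UnitAddCircle).indicator
      fun _ => (1 : ℂ)) n‖ ≤ N L / |(n : ℝ)| := fun L n hn => by
    obtain ⟨k, I, hk, hI, hdisj, hunion⟩ := hintervals L
    refine (norm_fourierCoeff_indicator_coe_image_le (hsub' L) hI hdisj hunion hn).trans ?_
    gcongr
  have hcircle := ae_coe_of_ae_haarAddCircle <| ae_eventually_exists_prime_nsmul_mem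
    (fun L => measurableSet_coe_image (hsub' L) (hmeas L)) hN_one hvpos hN hv
    (fun L => (hvreal L).trans_eq (hvolume L).symm) hcoeff hr
  filter_upwards [hcircle] with α hα
  refine hα.mono fun L ⟨p, hp, hple, hpR⟩ => ⟨p, hp, (hvolume L) ▸ hple, ?_⟩
  rwa [← AddCircle.coe_nsmul, nsmul_eq_mul, coe_mem_coe_image_iff_fract_mem (hsub L)] at hpR

end FractionalParts

theorem stmt11_general (N v : ℕ → ℝ) (hN : IsSubexponential fun L => Real.log (N L))
    (hv : IsSubexponential fun L => Real.log (v L)) (hvpos : ∀ L, 0 < v L)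
    (R : ℕ → Set ℝ) (hsub : ∀ L, R L ⊆ Set.Ico 0 1)
    (hvol : ∀ L, ENNReal.ofReal (v L) ≤ volume (R L))
    (hintervals : ∀ L, ∃ (n : ℕ) (I : Fin n → Set ℝ), (n : ℝ) ≤ N L ∧
      (∀ i, (I i).OrdConnected) ∧ (Pairwise fun i j => Disjoint (I i) (I j)) ∧ R L = ⋃ i, I i) :
    ∀ᵐ α : ℝ, ∀ η > 0, ∀ᶠ L in atTop, ∃ p : ℕ, p.Prime ∧
      (p : ℝ) ≤ (1 + η) ^ L / (volume (R L)).toReal ∧ Int.fract (p * α) ∈ R L := by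
  have hcountable : ∀ᵐ α : ℝ, ∀ j : ℕ, ∀ᶠ L in atTop, ∃ p : ℕ, p.Prime ∧
      (p : ℝ) ≤ (1 + 1 / ((j : ℝ) + 1)) ^ L / volume.real (R L) ∧ Int.fract (p * α) ∈ R L :=
    ae_all_iff.mpr fun j => ae_eventually_exists_prime_fract_mem hN hv hvpos hsub hvol hintervals
      (lt_add_of_pos_right 1 Nat.one_div_pos_of_nat)
  filter_upwards [hcountable] with α hα η hη
  obtain ⟨j, hj⟩ := exists_nat_one_div_lt hη
  refine (hα j).mono fun L ⟨p, hp, hple, hpR⟩ => ⟨p, hp, hple.trans ?_, hpR⟩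
  rw [measureReal_def]
  gcongr

theorem stmt11 (A B : ℝ) (hA : 0 < A) (hB : 0 < B)
    (R : ℕ → Set ℝ)
    (hmeas : ∀ L : ℕ, MeasurableSet (R L))
    (hsub : ∀ L : ℕ, R L ⊆ Set.Ico (0 : ℝ) 1)
    (hvol : ∀ L : ℕ, ENNReal.ofReal (B ^ (-(L : ℝ))) ≤ volume (R L))
    (hintervals : ∀ L : ℕ, ∃ (n : ℕ) (I : Fin n → Set ℝ),
      (n : ℝ) ≤ A ^ (L ^ 2) ∧ (∀ i, (I i).OrdConnected) ∧
      (Pairwise fun i j => Disjoint (I i) (I j)) ∧ R L = ⋃ i, I i) :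
    ∀ᵐ α ∂(volume : Measure ℝ), α ∈ Set.Ico (0 : ℝ) 1 → ∀ η > 0,
      ∃ᶠ L : ℕ in atTop, ∃ h : ℕ, 0 < h ∧
        (h : ℝ) ≤ (1 + η) ^ L / (volume (R L)).toReal ∧ Int.fract ((h : ℝ) * α) ∈ R L :=
  (stmt11_general _ _ (isSubexponential_log_pow_pow A 2) (isSubexponential_log_rpow_neg hB)
    (fun _ => Real.rpow_pos_of_pos hB _) R hsub hvol hintervals).mono fun _ hα _ η hη =>
      (hα η hη).frequently.mono fun _ ⟨p, hp, hple, hpR⟩ => ⟨p, hp.pos, hple, hpR⟩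
end

section
/- Let f ∈ ℤ[x] be a polynomial of degree d ≥ 2. Then for every ε > 0 there exists a constant C_ε such that for every nonzero integer a, the number of pairs (x,y) of positive integers with f(x) − f(y) = a is at most C_ε·|a|^ε. -/
/-!
If `f x - f y = a` with `a ≠ 0`, then `h = x - y` is a nonzero divisor of `a`, and for each such `h`
the polynomial `f (Y + h) - f Y - a` is nonzero of degree `deg f - 1 ≥ 1`, its coefficient of
`Y ^ (deg f - 1)` being `deg f * h` times the leading coefficient of `f`. So there are at most
`(deg f - 1) * 2 * τ(|a|)` solutions, and `τ(n) ≪ n ^ ε` because, up to a factor that is bounded and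
equal to `1` for all large primes, each factor `k + 1` of `τ(n)` is at most `(p ^ k) ^ ε`.
-/

section Polynomial

open Polynomial

theorem coeff_taylor_natDegree_sub_one {R : Type*} [Semiring R] (f : R[X]) (h : R) :
    (taylor h f).coeff (f.natDegree - 1) =
      f.coeff (f.natDegree - 1) + f.natDegree * f.leadingCoeff * h := by
  rcases hd : f.natDegree with _ | n
  · rw [eq_C_of_natDegree_eq_zero hd]
    simp
  · have hlin : (hasseDeriv n f).natDegree < 2 := by
      have := natDegree_hasseDeriv_le f n
      omega
    rw [Nat.add_sub_cancel, taylor_coeff, eval_eq_sum_range' hlin, Finset.sum_range_succ,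
      Finset.sum_range_one, hasseDeriv_coeff, hasseDeriv_coeff, leadingCoeff, hd]
    simp [add_comm 1 n]

theorem natDegree_taylor_sub_self {R : Type*} [Ring R] [NoZeroDivisors R] [CharZero R] (f : R[X])
    {h : R} (hh : h ≠ 0) : (taylor h f - f).natDegree = f.natDegree - 1 := by
  rcases Nat.eq_zero_or_pos f.natDegree with hd | hd
  · rw [eq_C_of_natDegree_eq_zero hd]
    simp
  have hf : f ≠ 0 := ne_zero_of_natDegree_gt hd
  have hcoeff : (taylor h f - f).coeff (f.natDegree - 1) ≠ 0 := by
    rw [coeff_sub, coeff_taylor_natDegree_sub_one, add_sub_cancel_left]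
    exact mul_ne_zero (mul_ne_zero (Nat.cast_ne_zero.mpr hd.ne') (leadingCoeff_ne_zero.mpr hf)) hh
  have hne : taylor h f - f ≠ 0 := fun h0 => hcoeff (by rw [h0, coeff_zero])
  have hlt : (taylor h f - f).degree < f.degree :=
    degree_sub_lt_right (degree_taylor f h) hf (leadingCoeff_taylor h f)
  exact natDegree_eq_of_le_of_coeff_ne_zero
    (Nat.le_sub_one_of_lt (natDegree_lt_natDegree hne hlt)) hcoeff

variable {R : Type*} [CommRing R] [IsDomain R] [CharZero R] {f : R[X]}

theorem encard_setOf_eval_add_sub_eval_eq_le (hf : 2 ≤ f.natDegree) {h : R} (hh : h ≠ 0) (a : R) :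
    {y | f.eval (y + h) - f.eval y = a}.encard ≤ ↑(f.natDegree - 1) := by
  set q := taylor h f - f - C a
  have hq : q.natDegree = f.natDegree - 1 := by
    rw [natDegree_sub_C, natDegree_taylor_sub_self f hh]
  have hq0 : q ≠ 0 := ne_zero_of_natDegree_gt (n := 0) (by omega)
  have hroots : {y | f.eval (y + h) - f.eval y = a} = q.rootSet R := by
    ext y
    simp [mem_rootSet, hq0, q, sub_eq_zero, taylor_eval]
  rw [hroots, Set.encard_le_coe_iff_finite_ncard_le, ← hq]
  exact ⟨rootSet_finite q R, ncard_rootSet_le q R⟩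

theorem encard_setOf_eval_sub_eval_eq_le (hf : 2 ≤ f.natDegree) {a : R} (ha : a ≠ 0)
    {D : Finset R} (hD : ∀ h, h ∣ a → h ∈ D) :
    {p : R × R | f.eval p.1 - f.eval p.2 = a}.encard ≤ ↑(D.card * (f.natDegree - 1)) := by
  classical
  have hcover : {p : R × R | f.eval p.1 - f.eval p.2 = a} ⊆
      ⋃ h ∈ D.erase 0, (fun y => (y + h, y)) '' {y | f.eval (y + h) - f.eval y = a} := by
    rintro ⟨x, y⟩ (hxy : f.eval x - f.eval y = a)
    have hdvd : x - y ∣ a := hxy ▸ sub_dvd_eval_sub x y f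
    have hmem : x - y ∈ D.erase 0 :=
      Finset.mem_erase.mpr ⟨ne_zero_of_dvd_ne_zero ha hdvd, hD _ hdvd⟩
    exact Set.mem_biUnion hmem ⟨y, by simpa using hxy, by simp⟩
  calc {p : R × R | f.eval p.1 - f.eval p.2 = a}.encard
    _ ≤ ∑ h ∈ D.erase 0,
          ((fun y => (y + h, y)) '' {y | f.eval (y + h) - f.eval y = a}).encard :=
        (Set.encard_le_encard hcover).trans (Finset.set_encard_biUnion_le _ _)
    _ ≤ ∑ _ ∈ D.erase 0, ↑(f.natDegree - 1) :=
        Finset.sum_le_sum fun h hh => (Set.encard_image_le _ _).trans <|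
          encard_setOf_eval_add_sub_eval_eq_le hf (Finset.ne_of_mem_erase hh) a
    _ = ↑((D.erase 0).card * (f.natDegree - 1)) := by simp
    _ ≤ ↑(D.card * (f.natDegree - 1)) := by
        gcongr
        exact D.erase_subset 0

end Polynomial

section DivisorBound

open ArithmeticFunction
open scoped ArithmeticFunction.sigma

theorem le_pow_mul_rpow_of_isMultiplicative {f : ArithmeticFunction ℝ} (hf : f.IsMultiplicative)
    (hf0 : ∀ n, 0 ≤ f n) {A ε : ℝ} (hA : 1 ≤ A) {P : ℕ}
    (hsmall : ∀ p k, p.Prime → p < P → f (p ^ k) ≤ A * ((p ^ k : ℕ) : ℝ) ^ ε)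
    (hlarge : ∀ p k, p.Prime → P ≤ p → f (p ^ k) ≤ ((p ^ k : ℕ) : ℝ) ^ ε) (n : ℕ) :
    f n ≤ A ^ P * (n : ℝ) ^ ε := by
  rcases eq_or_ne n 0 with rfl | hn
  · rw [ArithmeticFunction.map_zero]
    positivity
  have hrpow : (n : ℝ) ^ ε =
      ∏ p ∈ n.primeFactors, ((p ^ n.factorization p : ℕ) : ℝ) ^ ε :=
    Nat.multiplicative_factorization (fun m : ℕ => (m : ℝ) ^ ε)
      (fun x y _ => by simp only [Nat.cast_mul, Real.mul_rpow x.cast_nonneg y.cast_nonneg])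
      (by simp) hn
  have hconst : ∏ p ∈ n.primeFactors, (if p < P then A else 1) ≤ A ^ P := by
    rw [← Finset.prod_filter, Finset.prod_const]
    refine pow_le_pow_right₀ hA ?_
    calc (n.primeFactors.filter (· < P)).card
      _ ≤ (Finset.range P).card := Finset.card_le_card fun p hp => by
          simpa using (Finset.mem_filter.mp hp).2
      _ = P := Finset.card_range P
  calc f n = ∏ p ∈ n.primeFactors, f (p ^ n.factorization p) :=
        hf.multiplicative_factorization f hn
    _ ≤ ∏ p ∈ n.primeFactors,
          (if p < P then A else 1) * ((p ^ n.factorization p : ℕ) : ℝ) ^ ε := by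
        refine Finset.prod_le_prod (fun p _ => hf0 _) fun p hp => ?_
        have hprime := Nat.prime_of_mem_primeFactors hp
        split_ifs with hpP
        · exact hsmall p _ hprime hpP
        · simpa only [one_mul] using hlarge p _ hprime (not_lt.mp hpP)
    _ ≤ A ^ P * (n : ℝ) ^ ε := by
        rw [Finset.prod_mul_distrib, ← hrpow]
        gcongr

theorem natCast_add_one_le_mul_pow {c : ℝ} (hc : 1 < c) (k : ℕ) :
    (k : ℝ) + 1 ≤ c / (c - 1) * c ^ k := by
  have hbernoulli : 1 + ((k + 1 : ℕ) : ℝ) * (c - 1) ≤ c ^ (k + 1) :=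
    one_add_mul_sub_le_pow (by linarith) (k + 1)
  rw [div_mul_eq_mul_div, le_div_iff₀ (sub_pos.mpr hc), ← pow_succ']
  push_cast at hbernoulli
  linarith

theorem exists_card_divisors_le_mul_rpow {ε : ℝ} (hε : 0 < ε) :
    ∃ C : ℝ, ∀ n : ℕ, (n.divisors.card : ℝ) ≤ C * (n : ℝ) ^ ε := by
  obtain ⟨P, hP⟩ : ∃ P : ℕ, ∀ p ≥ P, (2 : ℝ) ≤ (p : ℝ) ^ ε :=
    Filter.eventually_atTop.mp <|
      ((tendsto_rpow_atTop hε).comp tendsto_natCast_atTop_atTop).eventually_ge_atTop 2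
  set c : ℝ := 2 ^ ε
  have hc : 1 < c := Real.one_lt_rpow one_lt_two hε
  have hA : 1 ≤ c / (c - 1) := (one_le_div (sub_pos.mpr hc)).mpr (by linarith)
  have hcast (p k : ℕ) : ((p ^ k : ℕ) : ℝ) ^ ε = ((p : ℝ) ^ ε) ^ k := by
    rw [Nat.cast_pow, Real.rpow_pow_comm p.cast_nonneg]
  have hsigma (p k : ℕ) (hp : p.Prime) : (σ 0 : ArithmeticFunction ℝ) (p ^ k) = k + 1 := by
    rw [natCoe_apply, sigma_zero_apply_prime_pow hp]
    push_cast
    rfl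
  refine ⟨(c / (c - 1)) ^ P, fun n => ?_⟩
  rw [← sigma_zero_apply, ← natCoe_apply]
  refine le_pow_mul_rpow_of_isMultiplicative isMultiplicative_sigma.natCast
    (fun n => Nat.cast_nonneg _) hA (fun p k hp _ => ?_) (fun p k hp hPp => ?_) n
  · have hp2 : (2 : ℝ) ≤ p := mod_cast hp.two_le
    calc (σ 0 : ArithmeticFunction ℝ) (p ^ k) = k + 1 := hsigma p k hp
      _ ≤ c / (c - 1) * c ^ k := natCast_add_one_le_mul_pow hc k
      _ ≤ c / (c - 1) * ((p ^ k : ℕ) : ℝ) ^ ε := by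
          rw [hcast]
          gcongr ?_ * ?_ ^ k
          exact Real.rpow_le_rpow two_pos.le hp2 hε.le
  · calc (σ 0 : ArithmeticFunction ℝ) (p ^ k) = k + 1 := hsigma p k hp
      _ ≤ 2 ^ k := mod_cast Nat.lt_two_pow_self
      _ ≤ ((p ^ k : ℕ) : ℝ) ^ ε := by
          rw [hcast]
          gcongr
          exact hP p hPp

end DivisorBound

theorem card_intDivisors (a : ℤ) : a.divisors.card = 2 * a.natAbs.divisors.card := by
  rw [Int.divisors, Finset.card_disjUnion, Finset.card_map, Finset.card_map, two_mul]

theorem finite_and_ncard_le_of_mapsTo_of_injOn {α β : Type*} {φ : α → β} {s : Set α} {t : Set β}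
    (hmaps : s.MapsTo φ t) (hinj : s.InjOn φ) {b : ℝ} (ht : t.Finite ∧ (t.ncard : ℝ) ≤ b) :
    s.Finite ∧ (s.ncard : ℝ) ≤ b :=
  ⟨ht.1.of_injOn hmaps hinj,
    (Nat.cast_le.mpr (Set.ncard_le_ncard_of_injOn φ hmaps hinj ht.1)).trans ht.2⟩

theorem stmt13_general {ε : ℝ} (hε : 0 < ε) :
    ∃ C : ℝ, ∀ f : Polynomial ℤ, 2 ≤ f.natDegree → ∀ a : ℤ, a ≠ 0 →
      {p : ℤ × ℤ | f.eval p.1 - f.eval p.2 = a}.Finite ∧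
      ({p : ℤ × ℤ | f.eval p.1 - f.eval p.2 = a}.ncard : ℝ) ≤
        C * (f.natDegree - 1 : ℕ) * (|a| : ℝ) ^ ε := by
  obtain ⟨C, hC⟩ := exists_card_divisors_le_mul_rpow hε
  refine ⟨2 * C, fun f hf a ha => ?_⟩
  obtain ⟨hfin, hcard⟩ := Set.encard_le_coe_iff_finite_ncard_le.mp <|
    encard_setOf_eval_sub_eval_eq_le hf ha (D := a.divisors) fun h hh =>
      Int.mem_divisors.mpr ⟨hh, ha⟩
  refine ⟨hfin, ?_⟩
  have hdiv : (a.natAbs.divisors.card : ℝ) ≤ C * (|a| : ℝ) ^ ε := by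
    simpa only [Nat.cast_natAbs, Int.cast_abs] using hC a.natAbs
  calc ({p : ℤ × ℤ | f.eval p.1 - f.eval p.2 = a}.ncard : ℝ)
    _ ≤ 2 * a.natAbs.divisors.card * (f.natDegree - 1 : ℕ) := by
        rw [card_intDivisors] at hcard
        exact_mod_cast hcard
    _ ≤ 2 * (C * (|a| : ℝ) ^ ε) * (f.natDegree - 1 : ℕ) := by gcongr
    _ = 2 * C * (f.natDegree - 1 : ℕ) * (|a| : ℝ) ^ ε := by ring

theorem stmt13 (f : Polynomial ℤ) (hdeg : 2 ≤ f.natDegree) :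
    ∀ ε > (0 : ℝ), ∃ Cε : ℝ, ∀ a : ℤ, a ≠ 0 →
      {p : ℕ × ℕ | 0 < p.1 ∧ 0 < p.2 ∧ f.eval (p.1 : ℤ) - f.eval (p.2 : ℤ) = a}.Finite ∧
      ({p : ℕ × ℕ | 0 < p.1 ∧ 0 < p.2 ∧
          f.eval (p.1 : ℤ) - f.eval (p.2 : ℤ) = a}.ncard : ℝ) ≤ Cε * (|a| : ℝ) ^ ε := by
  intro ε hε
  obtain ⟨C, hC⟩ := stmt13_general hε
  exact ⟨C * (f.natDegree - 1 : ℕ), fun a ha => finite_and_ncard_le_of_mapsTo_of_injOn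
    (fun p hp => hp.2.2) (Nat.cast_injective.prodMap Nat.cast_injective).injOn (hC f hdeg a ha)⟩
end
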